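/- (Elementary form of the main theorem, computing Kostant's coefficient for SU(k)) Let k ≥ 2 and let λ be a partition with at most k parts λ_1 ≥ … ≥ λ_k ≥ 0 and |λ| = kp. Then (−1)^{(k−1)p} · Σ_{μ ⊢ p} (1/z_μ) · χ^λ_{kμ} equals 0 if the numbers λ_i + k − i (1 ≤ i ≤ k) do not have k distinct residues modulo k, and otherwise equals the sign of the unique permutation τ ∈ S_k satisfying λ_{τ(i)} − p + k − τ(i) ≡ k − i (mod k) for all 1 ≤ i ≤ k. In particular this quantity always lies in {0, 1, −1}. -/

import Mathlib

open scoped BigOperators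

namespace RimHookPaper

/-- A partition: a weakly decreasing, eventually-zero sequence of naturals;
`parts n` is the `(n+1)`-st part. -/
structure Partition : Type where
  parts : ℕ → ℕ
  antitone : ∀ ⦃i j : ℕ⦄, i ≤ j → parts j ≤ parts i
  eventually_zero : ∃ N : ℕ, ∀ i : ℕ, N ≤ i → parts i = 0

namespace Partition

/-- The size `|λ|` of a partition. -/
noncomputable def size (P : Partition) : ℕ := ∑ᶠ i, P.parts i

/-- The empty partition. -/
def empty : Partition := ⟨fun _ => 0, fun _ _ _ => le_rfl, ⟨0, fun _ _ => rfl⟩⟩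

/-- The number of nonzero parts of a partition. -/
noncomputable def length (P : Partition) : ℕ := sInf {N | P.parts N = 0}

/-- The cells of the Young diagram of a partition. -/
def cells (P : Partition) : Set (ℕ × ℕ) := {c | c.2 < P.parts c.1}

instance : LE Partition := ⟨fun Q P => ∀ i, Q.parts i ≤ P.parts i⟩

/-- The skew shape `P / Q` (as a set of cells). -/
def skew (P Q : Partition) : Set (ℕ × ℕ) := P.cells \ Q.cells

end Partition

/-- Edge-adjacency of cells. -/
def Adj (c d : ℕ × ℕ) : Prop :=
  (c.1 = d.1 ∧ (c.2 + 1 = d.2 ∨ d.2 + 1 = c.2)) ∨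
    (c.2 = d.2 ∧ (c.1 + 1 = d.1 ∨ d.1 + 1 = c.1))

/-- A set of cells is (edge-)connected. -/
def IsConnectedSet (S : Set (ℕ × ℕ)) : Prop :=
  ∀ c ∈ S, ∀ d ∈ S, Relation.ReflTransGen (fun x y => x ∈ S ∧ y ∈ S ∧ Adj x y) c d

/-- `S` contains no 2×2 square. -/
def NoSquare (S : Set (ℕ × ℕ)) : Prop :=
  ¬ ∃ i j : ℕ, (i, j) ∈ S ∧ (i + 1, j) ∈ S ∧ (i, j + 1) ∈ S ∧ (i + 1, j + 1) ∈ S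

/-- `P / Q` is a rim hook (border strip) of length `t`: a nonempty connected skew
shape with no 2×2 square, consisting of `t` boxes. -/
def IsRimHook (P Q : Partition) (t : ℕ) : Prop :=
  Q ≤ P ∧ (P.skew Q).Nonempty ∧ IsConnectedSet (P.skew Q) ∧ NoSquare (P.skew Q) ∧
    (P.skew Q).ncard = t

/-- One step of a rim hook tableau: an empty hook (`t = 0`) or a rim hook of length `t`. -/
def IsStep (P Q : Partition) (t : ℕ) : Prop :=
  (t = 0 ∧ P = Q) ∨ (0 < t ∧ IsRimHook P Q t)

/-- Number of rows met by a set of cells. -/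
noncomputable def rowCount (S : Set (ℕ × ℕ)) : ℕ := (Prod.fst '' S).ncard

/-- A rim hook tableau of shape `P` and type `μ`: a chain
`∅ = λ⁰ ⊆ λ¹ ⊆ ⋯ ⊆ λʳ = P` with each `λⁱ/λⁱ⁻¹` a (possibly empty)
rim hook of length `μᵢ`. -/
structure RHT (P : Partition) (μ : List ℕ) : Type where
  chain : Fin (μ.length + 1) → Partition
  chain_zero : chain 0 = Partition.empty
  chain_last : chain (Fin.last μ.length) = P
  step : ∀ j : Fin μ.length, IsStep (chain j.succ) (chain j.castSucc) (μ.get j)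

/-- The total height of a rim hook tableau: the sum of the heights
(number of rows minus one) of its nonempty rim hooks. -/
noncomputable def RHT.height {P : Partition} {μ : List ℕ} (T : RHT P μ) : ℕ :=
  ∑ j : Fin μ.length, (rowCount ((T.chain j.succ).skew (T.chain j.castSucc)) - 1)

/-- The character value `χ^λ_μ` of the symmetric group, via the
Murnaghan–Nakayama rule. -/
noncomputable def chiAux (P : Partition) (μ : List ℕ) : ℤ :=
  ∑ᶠ T : RHT P μ, (-1 : ℤ) ^ T.height

/-- The parts of a multiset, listed in weakly decreasing order. -/
def typeList (μ : Multiset ℕ) : List ℕ := (μ.sort (· ≤ ·)).reverse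

/-- `χ^λ_μ` for a multiset type `μ`. -/
noncomputable def chi (P : Partition) (μ : Multiset ℕ) : ℤ := chiAux P (typeList μ)

/-- `z_μ = ∏_j m_j! · j^{m_j}` where `μ` has `m_j` parts equal to `j`. -/
def zpart (μ : Multiset ℕ) : ℕ := μ.prod * ∏ j ∈ μ.toFinset, (μ.count j).factorial

/-- `χ^λ(σ)`: the character evaluated at a permutation, via its full cycle type
(including fixed points as parts equal to 1). -/
noncomputable def chiPerm (P : Partition) {m : ℕ} (σ : Equiv.Perm (Fin m)) : ℤ :=
  chi P (σ.cycleType + Multiset.replicate (m - σ.cycleType.sum) 1)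

/-- Position of the zero (up step) corresponding to row `n` in the 0/1 sequence
`s(P)`, where the median of `s(P)` is the gap just below position `0`. -/
def zpos (P : Partition) (n : ℕ) : ℤ := (P.parts n : ℤ) - (n : ℤ) - 1

/-- `s(P)` has a `0` (an up step) at position `x`; otherwise it has a `1`. -/
def isZeroAt (P : Partition) (x : ℤ) : Prop := ∃ n : ℕ, zpos P n = x

/-- `Q` is the `k`-quotient of `P`: for each residue `i`, the 0/1 sequence of `Q i`
is (up to the shift `d` recording the position of its median) the subsequence of
`s(P)` consisting of every `k`-th digit, including the `(i+1)`-st digit after the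
median of `s(P)`. -/
def IsKQuotient (k : ℕ) (P : Partition) (Q : Fin k → Partition) : Prop :=
  ∀ i : Fin k, ∃ d : ℤ, ∀ j : ℤ,
    isZeroAt (Q i) j ↔ isZeroAt P (((i : ℕ) : ℤ) + (j + d) * (k : ℤ))

/-- `C` is the `k`-core of `P`: it is obtained from `P` by successively removing
rim hooks of length `k`, as long as possible. -/
def IsKCore (k : ℕ) (P C : Partition) : Prop :=
  Relation.ReflTransGen (fun A B => IsRimHook A B k) P C ∧ ¬ ∃ C', IsRimHook C C' k

/-- The map on row indices induced by moving the zero in row `m` down (left)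
to row `m'`, the zeros in rows `m+1,…,m'` each moving up one row. -/
def cycleFun (m m' n : ℕ) : ℕ :=
  if n = m then m' else if m < n ∧ n ≤ m' then n - 1 else n

/-- One tracking step for the zero permutation: passing from `A` to `B` by removing
a rim hook, encoded on the 0/1 sequence as interchanging a `1` with a later `0`
(the moved zero, in row `m` of `A`, jumps over `m' - m` zeros, landing in row `m'`
of `B`); the row of each labeled zero is updated by `cycleFun m m'`. -/
def StepTrack (A B : Partition) (f g : ℕ → ℕ) : Prop :=
  (A = B ∧ g = f) ∨
    ∃ m m' : ℕ, m ≤ m' ∧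
      (∀ n, n < m → zpos B n = zpos A n) ∧
      (∀ n, m ≤ n → n < m' → zpos B n = zpos A (n + 1)) ∧
      (∀ n, m' < n → zpos B n = zpos A n) ∧
      g = fun i => cycleFun m m' (f i)

/-- `π` is the zero permutation of the rim hook tableau `T`: label the zeros of
`s(P)` succeeding the first one by `1,…,ℓ(P)` from left to right (`q j i` is the
row of label `i+1` at stage `j` of the peeling, rows counted from the top), peel
the rim hooks of `T` in order of decreasing entries, and read off the labels in
the final sequence `s(∅)` from left to right. -/
def IsZeroPerm {P : Partition} {μ : List ℕ} (T : RHT P μ)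
    (π : Equiv.Perm (Fin P.length)) : Prop :=
  ∃ q : Fin (μ.length + 1) → ℕ → ℕ,
    (∀ i : ℕ, i < P.length → q (Fin.last μ.length) i = P.length - 1 - i) ∧
    (∀ j : Fin μ.length,
      StepTrack (T.chain j.succ) (T.chain j.castSucc) (q j.succ) (q j.castSucc)) ∧
    (∀ i : Fin P.length, q 0 ((π i : ℕ)) = P.length - 1 - (i : ℕ))

/-- `ω(T) = (T₁,…,T_k)`: the rim hook tableau `T` (all of whose hook lengths are
divisible by `k`) decomposes into the `k`-tuple of rim hook tableaux `Ti` on the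
`k`-quotient: each step of `T`, removing a hook of length `k·t`, affects exactly
one subsequence (mod `k`) of the 0/1 sequence, i.e. removes a hook of length `t`
from exactly one of the quotient partitions. -/
def OmegaRel (k : ℕ) {P : Partition} {κ : List ℕ} (T : RHT P κ)
    {Q : Fin k → Partition} {ν : Fin k → List ℕ}
    (Ti : ∀ i : Fin k, RHT (Q i) (ν i)) : Prop :=
  ∃ (QC : Fin (κ.length + 1) → Fin k → Partition) (a : Fin κ.length → Fin k),
    (∀ j, IsKQuotient k (T.chain j) (QC j)) ∧
    (∀ j : Fin κ.length, ∀ i, i ≠ a j → QC j.castSucc i = QC j.succ i) ∧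
    (∀ j : Fin κ.length, ∃ t : ℕ, κ.get j = k * t ∧
      IsStep (QC j.succ (a j)) (QC j.castSucc (a j)) t) ∧
    (∀ i : Fin k, ∃ e : Fin (ν i).length → Fin κ.length,
      StrictMono e ∧ (∀ s, a (e s) = i) ∧ (∀ j, a j = i → ∃ s, e s = j) ∧
      (∀ s, k * (ν i).get s = κ.get (e s)) ∧
      (Ti i).chain 0 = QC 0 i ∧
      (∀ s : Fin (ν i).length, (Ti i).chain s.succ = QC (Fin.succ (e s)) i))

/-!
By the Murnaghan–Nakayama rule, `χ^λ_μ` is the coefficient of `x^{λ+δ}` in `a_δ p_μ`: multiplying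
an alternating polynomial by `p_t` moves one exponent by `t`, which on sorted exponents adds a rim
hook of length `t`. Since `p_{kμ} = p_μ(x^k)` and `∑_μ p_μ / z_μ = h_p`, the weighted sum of
characters is the coefficient of `x^{λ+δ}` in `a_δ h_p(x^k)`. The exponents occurring in `a_δ` are
less than `k`, so each can only be completed to `λ + δ` by multiples of `k` if it is `λ + δ`
reduced modulo `k`. Hence the sum is the coefficient of `x^{(λ+δ) mod k}` in `a_δ`, which is zero
or the sign of the permutation sorting these residues; the shift by `p` in the condition on `τ` is
the `p`-th power of a `k`-cycle and accounts for the factor `(-1)^{(k-1)p}`.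
-/

open Equiv MvPolynomial

section SymmetricPolynomials

variable {ι R : Type*} [Fintype ι] [CommSemiring R]

theorem coeff_psum_mul (t : ℕ) (f : MvPolynomial ι R) (b : ι →₀ ℕ) :
    coeff b (psum ι R t * f) = ∑ i, if t ≤ b i then coeff (b - Finsupp.single i t) f else 0 := by
  simp [psum, Finset.sum_mul, coeff_sum, X_pow_eq_monomial, coeff_monomial_mul']

theorem expand_psum (k n : ℕ) : expand k (psum ι R n) = psum ι R (k * n) := by
  simp [psum, pow_mul]

variable [DecidableEq ι]

theorem coeff_hsymm (n : ℕ) (b : ι →₀ ℕ) :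
    coeff b (hsymm ι R n) = if b.degree = n then 1 else 0 := by
  have hmon (s : Sym ι n) :
      (s.1.map X).prod = monomial (Multiset.toFinsupp s.1) (1 : R) := by
    rw [Finset.prod_multiset_map_count, ← prod_X_pow_eq_monomial]
    simp
  simp only [hsymm, hmon, coeff_sum, coeff_monomial]
  split_ifs with hb
  · have hcard : (Finsupp.toMultiset b).card = n := by
      rw [Finsupp.card_toMultiset, ← hb]
      rfl
    rw [Fintype.sum_eq_single ⟨Finsupp.toMultiset b, hcard⟩]
    · simp
    · refine fun s hs ↦ if_neg fun h ↦ hs (Subtype.ext ?_)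
      simp [← h]
  · refine Finset.sum_eq_zero fun s _ ↦ if_neg fun h ↦ hb ?_
    simp [← h, Finsupp.degree_eq_sum]

theorem mul_hsymm_eq_sum (n : ℕ) :
    n * hsymm ι R n = ∑ j ∈ Finset.Icc 1 n, psum ι R j * hsymm ι R (n - j) := by
  ext b
  have hdeg {j i} (hj : j ∈ Finset.Icc 1 n) (hi : j ≤ b i) :
      (b - Finsupp.single i j).degree = n - j ↔ b.degree = n := by
    have h := congrArg Finsupp.degree (tsub_add_cancel_of_le (Finsupp.single_le_iff.2 hi))
    rw [map_add, Finsupp.degree_single] at h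
    have := (Finset.mem_Icc.1 hj).2
    lia
  have hcount (hb : b.degree = n) (i : ι) :
      (Finset.Icc 1 n).filter (· ≤ b i) = Finset.Icc 1 (b i) := by
    have : b i ≤ n := hb ▸ Finsupp.le_degree i b
    ext j
    simp only [Finset.mem_filter, Finset.mem_Icc]
    lia
  calc coeff b ((n : MvPolynomial ι R) * hsymm ι R n)
      = (n : R) * if b.degree = n then 1 else 0 := by rw [← C_eq_coe_nat, coeff_C_mul, coeff_hsymm]
    _ = ∑ i, ∑ j ∈ Finset.Icc 1 n, if j ≤ b i then if b.degree = n then 1 else 0 else 0 := by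
        split_ifs with hb
        · simp [hb, hcount hb, ← Nat.cast_sum, ← Finsupp.degree_eq_sum]
        · simp
    _ = coeff b (∑ j ∈ Finset.Icc 1 n, psum ι R j * hsymm ι R (n - j)) := by
        simp only [coeff_sum, coeff_psum_mul, coeff_hsymm]
        rw [Finset.sum_comm]
        refine Finset.sum_congr rfl fun j hj ↦ Finset.sum_congr rfl fun i _ ↦ ?_
        split_ifs <;> simp_all

theorem coeff_monomial_mul_expand_hsymm {k p : ℕ} (hk : k ≠ 0) {c b : ι →₀ ℕ}
    (hc : ∀ i, c i < k) (hdeg : b.degree = k * p + c.degree) (r : R) :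
    coeff b (monomial c r * expand k (hsymm ι R p)) =
      if c = b.mapRange (· % k) (Nat.zero_mod k) then r else 0 := by
  rw [coeff_monomial_mul']
  split_ifs with hle hmod hmod
  · have hq : b - c = k • b.mapRange (· / k) (Nat.zero_div k) := by
      ext i
      simp [hmod, Nat.mul_div_self_eq_mod_sub_self]
    have hdeg' := congrArg Finsupp.degree (tsub_add_cancel_of_le hle)
    rw [hq, map_add, map_nsmul, smul_eq_mul, hdeg, Nat.add_right_cancel_iff,
      Nat.mul_right_inj hk] at hdeg'
    rw [hq, coeff_expand_smul _ hk, coeff_hsymm, if_pos hdeg', mul_one]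
  · obtain ⟨i, hi⟩ := DFunLike.ne_iff.1 hmod
    rw [coeff_expand_of_not_dvd _ (i := i), mul_zero]
    rw [Finsupp.tsub_apply, ← Nat.modEq_iff_dvd' (hle i), Nat.ModEq, Nat.mod_eq_of_lt (hc i)]
    rwa [Finsupp.mapRange_apply] at hi
  · refine absurd (fun i ↦ ?_) hle
    rw [hmod, Finsupp.mapRange_apply]
    exact Nat.mod_le _ _
  · rfl

end SymmetricPolynomials

section Alternating

variable {ι R : Type*} [Fintype ι] [DecidableEq ι] [CommRing R]

/-- Permuting the variables of `f` multiplies it by the sign of the permutation. -/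
def IsAlternating (f : MvPolynomial ι R) : Prop :=
  ∀ π : Perm ι, rename π f = Perm.sign π • f

namespace IsAlternating

variable {f g : MvPolynomial ι R}

theorem mul_isSymmetric (hf : IsAlternating f) (hg : g.IsSymmetric) : IsAlternating (f * g) :=
  fun π ↦ by rw [map_mul, hf π, hg π, smul_mul_assoc]

theorem coeff_mapDomain (hf : IsAlternating f) (π : Perm ι) (b : ι →₀ ℕ) :
    coeff (b.mapDomain π) f = Perm.sign π • coeff b f := by
  rw [← coeff_rename_mapDomain π π.injective f b, hf π, coeff_smul, smul_smul,
    Int.units_mul_self, one_smul]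

theorem coeff_eq_zero [IsAddTorsionFree R] (hf : IsAlternating f) {b : ι →₀ ℕ}
    (hb : ¬ Function.Injective b) : coeff b f = 0 := by
  simp only [Function.Injective, not_forall] at hb
  obtain ⟨i, j, hij, hne⟩ := hb
  have hswap : b.mapDomain (swap i j) = b := by
    ext x
    simp only [Finsupp.mapDomain_equiv_apply, symm_swap, swap_apply_def]
    split_ifs <;> simp_all
  have h := hf.coeff_mapDomain (swap i j) b
  rw [hswap, Perm.sign_swap hne, Units.neg_smul, one_smul] at h
  exact self_eq_neg.1 h

end IsAlternating

/-- The alternant `a_d = ∑_σ sign(σ) x^{σ(d)}`, the generalized Vandermonde determinant with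
exponents `d`. -/
noncomputable def alternant (R : Type*) [CommRing R] (d : ι →₀ ℕ) : MvPolynomial ι R :=
  ∑ σ : Perm ι, monomial (d.mapDomain σ) ((Perm.sign σ : ℤ) : R)

theorem coeff_alternant (d b : ι →₀ ℕ) :
    coeff b (alternant R d) =
      ∑ σ : Perm ι, if d.mapDomain σ = b then ((Perm.sign σ : ℤ) : R) else 0 := by
  simp only [alternant, coeff_sum, coeff_monomial]

theorem isAlternating_alternant (d : ι →₀ ℕ) : IsAlternating (alternant R d) := fun π ↦ by
  simp only [alternant, map_sum, Finset.smul_sum]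
  refine Fintype.sum_equiv (Equiv.mulLeft π) _ _ fun σ ↦ ?_
  rw [rename_monomial, ← Finsupp.mapDomain_comp, ← Perm.coe_mul, smul_monomial]
  simp [Units.smul_def, ← mul_assoc, ← Int.cast_mul, ← Units.val_mul, Int.units_mul_self]

theorem coeff_alternant_mapDomain {d : ι →₀ ℕ} (hd : Function.Injective d) (π : Perm ι) :
    coeff (d.mapDomain π) (alternant R d) = (Perm.sign π : ℤ) := by
  rw [coeff_alternant, Fintype.sum_eq_single π, if_pos rfl]
  refine fun σ hσ ↦ if_neg fun h ↦ hσ (Equiv.ext fun i ↦ ?_)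
  have h' := DFunLike.congr_fun h (σ i)
  rw [Finsupp.mapDomain_equiv_apply, Finsupp.mapDomain_equiv_apply, symm_apply_apply] at h'
  exact (symm_apply_eq π).1 (hd h').symm

theorem coeff_alternant_eq_zero_or_eq_one_or_eq_neg_one {d : ι →₀ ℕ} (hd : Function.Injective d)
    (b : ι →₀ ℕ) :
    coeff b (alternant R d) = 0 ∨ coeff b (alternant R d) = 1 ∨ coeff b (alternant R d) = -1 := by
  by_cases h : ∃ π : Perm ι, d.mapDomain π = b
  · obtain ⟨π, rfl⟩ := h
    rw [coeff_alternant_mapDomain hd]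
    rcases Int.units_eq_one_or (Perm.sign π) with h | h <;> simp [h]
  · left
    rw [coeff_alternant]
    exact Finset.sum_eq_zero fun π _ ↦ if_neg fun hπ ↦ h ⟨π, hπ⟩

theorem coeff_alternant_mul_expand_hsymm {k p : ℕ} (hk : k ≠ 0) {d b : ι →₀ ℕ}
    (hd : ∀ i, d i < k) (hb : b.degree = k * p + d.degree) :
    coeff b (alternant R d * expand k (hsymm ι R p)) =
      coeff (b.mapRange (· % k) (Nat.zero_mod k)) (alternant R d) := by
  rw [coeff_alternant, alternant, Finset.sum_mul, coeff_sum]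
  refine Finset.sum_congr rfl fun σ _ ↦ coeff_monomial_mul_expand_hsymm hk (fun i ↦ ?_) ?_ _
  · rw [Finsupp.mapDomain_equiv_apply]
    exact hd _
  · rwa [Finsupp.degree_mapDomain]

end Alternating

/-! ### Complete symmetric polynomials and power sums -/

theorem zpart_cons (j : ℕ) (ν : Multiset ℕ) :
    zpart (j ::ₘ ν) = j * (j ::ₘ ν).count j * zpart ν := by
  have hprod : ∏ x ∈ ν.toFinset, (ν.count x).factorial =
      ∏ x ∈ (j ::ₘ ν).toFinset, (ν.count x).factorial := by
    refine Finset.prod_subset (by simp) fun x _ hx ↦ ?_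
    rw [Multiset.count_eq_zero.2 (by simpa using hx), Nat.factorial_zero]
  have hj : j ∈ (j ::ₘ ν).toFinset := by simp
  have hrest : ∏ x ∈ (j ::ₘ ν).toFinset.erase j, ((j ::ₘ ν).count x).factorial =
      ∏ x ∈ (j ::ₘ ν).toFinset.erase j, (ν.count x).factorial :=
    Finset.prod_congr rfl fun x hx ↦ by
      rw [Multiset.count_cons_of_ne (Finset.ne_of_mem_erase hx)]
  rw [zpart, zpart, Multiset.prod_cons, hprod, ← Finset.mul_prod_erase _ _ hj,
    ← Finset.mul_prod_erase _ (fun x ↦ (ν.count x).factorial) hj, hrest,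
    Multiset.count_cons_self, Nat.factorial_succ]
  ring

theorem sum_partition_count_mul_div_zpart_smul {M : Type*} [AddCommMonoid M] [Module ℚ M]
    {n j : ℕ} (hj : j ∈ Finset.Icc 1 n) (f : Multiset ℕ → M) :
    ∑ μ : Nat.Partition n, ((j * μ.parts.count j : ℕ) / zpart μ.parts : ℚ) • f μ.parts =
      ∑ ν : Nat.Partition (n - j), (1 / zpart ν.parts : ℚ) • f (j ::ₘ ν.parts) := by
  obtain ⟨hj1, hjn⟩ := Finset.mem_Icc.1 hj
  let e := (Nat.Partition.partitionWithPartEquiv hj1 hjn).symm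
  refine (Fintype.sum_of_injective (fun ν ↦ (e ν).1)
    (Subtype.val_injective.comp e.injective) _ _ (fun μ hμ ↦ ?_) fun ν ↦ ?_).symm
  · have hjμ : j ∉ μ.parts := fun h ↦ hμ ⟨e.symm ⟨μ, h⟩, by simp⟩
    simp [Multiset.count_eq_zero.2 hjμ]
  · have hne : j * (j ::ₘ ν.parts).count j ≠ 0 := by
      rw [Multiset.count_cons_self]
      exact mul_ne_zero (by lia) (Nat.succ_ne_zero _)
    rw [Nat.Partition.partitionWithPartEquiv_symm_apply_parts hj1 hjn, zpart_cons,
      Nat.cast_mul _ (zpart _), div_mul_cancel_left₀ (Nat.cast_ne_zero.2 hne), one_div]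

theorem sum_Icc_mul_count_parts {n : ℕ} (μ : Nat.Partition n) :
    ∑ j ∈ Finset.Icc 1 n, j * μ.parts.count j = n := by
  have hsub : μ.parts.toFinset ⊆ Finset.Icc 1 n := fun j hj ↦ by
    rw [Multiset.mem_toFinset] at hj
    exact Finset.mem_Icc.2 ⟨μ.parts_pos hj, μ.le_of_mem_parts hj⟩
  conv_rhs => rw [← μ.parts_sum, Finset.sum_multiset_count_of_subset _ _ hsub]
  simp [mul_comm]

section PowerSums

variable {ι R : Type*} [Fintype ι] [DecidableEq ι] [CommSemiring R] [Algebra ℚ R]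

theorem hsymm_eq_sum_partition (n : ℕ) :
    hsymm ι R n =
      ∑ μ : Nat.Partition n, (1 / zpart μ.parts : ℚ) • (μ.parts.map (psum ι R)).prod := by
  induction n using Nat.strong_induction_on with
  | _ n ih =>
    rcases eq_or_ne n 0 with rfl | hn
    · simp [zpart]
    · have hn' : (n : ℚ) ≠ 0 := Nat.cast_ne_zero.2 hn
      refine (IsUnit.mk0 (n : ℚ) hn').smul_left_cancel.1 ?_
      calc (n : ℚ) • hsymm ι R n
          = ∑ j ∈ Finset.Icc 1 n, psum ι R j * hsymm ι R (n - j) := by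
            rw [← mul_hsymm_eq_sum, Nat.cast_smul_eq_nsmul, nsmul_eq_mul]
        _ = ∑ j ∈ Finset.Icc 1 n, ∑ ν : Nat.Partition (n - j),
              (1 / zpart ν.parts : ℚ) • ((j ::ₘ ν.parts).map (psum ι R)).prod := by
            refine Finset.sum_congr rfl fun j hj ↦ ?_
            have := Finset.mem_Icc.1 hj
            rw [ih (n - j) (by lia), Finset.mul_sum]
            simp
        _ = ∑ μ : Nat.Partition n, ∑ j ∈ Finset.Icc 1 n,
              ((j * μ.parts.count j : ℕ) / zpart μ.parts : ℚ) •
                (μ.parts.map (psum ι R)).prod := by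
            rw [Finset.sum_comm]
            exact Finset.sum_congr rfl fun j hj ↦
              (sum_partition_count_mul_div_zpart_smul hj fun μ ↦ (μ.map (psum ι R)).prod).symm
        _ = _ := by
            rw [Finset.smul_sum]
            refine Finset.sum_congr rfl fun μ _ ↦ ?_
            rw [← Finset.sum_smul, ← Finset.sum_div, ← Nat.cast_sum, sum_Icc_mul_count_parts,
              smul_smul, mul_one_div]

end PowerSums

/-! ### Rim hooks and zero positions -/

theorem zpos_strictAnti (P : Partition) : StrictAnti (zpos P) := by
  refine strictAnti_nat_of_succ_lt fun n ↦ ?_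
  have := P.antitone n.le_succ
  simp only [zpos]
  lia

theorem zpos_injective : Function.Injective zpos := by
  intro P Q h
  have hparts : P.parts = Q.parts := by
    funext r
    have := congrFun h r
    simp only [zpos] at this
    lia
  cases P
  cases Q
  congr

theorem exists_zpos_eq {f : ℕ → ℤ} (hf : StrictAnti f) {N : ℕ}
    (hN : ∀ r, N ≤ r → f r = -r - 1) : ∃ Q : Partition, zpos Q = f := by
  have hanti : Antitone fun r : ℕ ↦ f r + r + 1 := antitone_nat_of_succ_le fun r ↦ by
    have := hf r.lt_succ_self
    push_cast
    lia
  have hnonneg (r : ℕ) : 0 ≤ f r + r + 1 := by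
    have := hanti (le_max_left r N)
    have := hN _ (le_max_right r N)
    lia
  refine ⟨⟨fun r ↦ (f r + r + 1).toNat, fun r s hrs ↦ Int.toNat_le_toNat (hanti hrs),
    N, fun r hr ↦ by rw [hN r hr]; lia⟩, ?_⟩
  funext r
  have := hnonneg r
  simp only [zpos]
  lia

theorem Partition.mem_skew {P Q : Partition} {r c : ℕ} :
    (r, c) ∈ P.skew Q ↔ Q.parts r ≤ c ∧ c < P.parts r := by
  simp [Partition.skew, Partition.cells, and_comm]

theorem Partition.ncard_skew {P Q : Partition} {s : Finset ℕ}
    (hs : ∀ r, Q.parts r < P.parts r → r ∈ s) :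
    (P.skew Q).ncard = ∑ r ∈ s, (P.parts r - Q.parts r) := by
  have h : P.skew Q = ↑((s.sigma fun r ↦ Finset.Ico (Q.parts r) (P.parts r)).map
      (Equiv.sigmaEquivProd ℕ ℕ).toEmbedding) := by
    ext ⟨r, c⟩
    have := hs r
    simp only [mem_skew, Finset.coe_map, Set.mem_image, Finset.mem_coe, Finset.mem_sigma,
      Finset.mem_Ico, Sigma.exists, Equiv.coe_toEmbedding, Equiv.sigmaEquivProd_apply,
      Prod.mk.injEq]
    constructor
    · rintro ⟨hQ, hP⟩
      exact ⟨r, c, ⟨this (hQ.trans_lt hP), hQ, hP⟩, rfl, rfl⟩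
    · rintro ⟨r, c, ⟨-, hc⟩, rfl, rfl⟩
      exact hc
  rw [h, Set.ncard_coe_finset, Finset.card_map, Finset.card_sigma]
  simp only [Nat.card_Ico]

/-- `P / Q` is a rim hook of length `t` occupying exactly the rows `i, …, j`, expressed through the
zero positions: the zero of row `i` moves `t` places down and lands in row `j`, and the zeros it
passes move up by one row. -/
structure IsRimHookOn (P Q : Partition) (i j t : ℕ) : Prop where
  pos : 0 < t
  le : i ≤ j
  zpos_of_lt : ∀ r < i, zpos Q r = zpos P r
  zpos_of_le_of_lt : ∀ r, i ≤ r → r < j → zpos Q r = zpos P (r + 1)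
  zpos_bot : zpos Q j = zpos P i - t
  zpos_of_gt : ∀ r, j < r → zpos Q r = zpos P r

namespace IsRimHookOn

variable {P Q : Partition} {i j t : ℕ}

theorem zpos_bot_lt (h : IsRimHookOn P Q i j t) : zpos Q j < zpos P j := by
  rcases h.le.eq_or_lt with rfl | hij
  · have := h.zpos_bot
    have := h.pos
    lia
  · have := h.zpos_of_le_of_lt (j - 1) (by lia) (by lia)
    rw [Nat.sub_add_cancel (by lia)] at this
    exact this ▸ zpos_strictAnti Q (by lia)

theorem parts_lt_iff (h : IsRimHookOn P Q i j t) (r : ℕ) :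
    Q.parts r < P.parts r ↔ i ≤ r ∧ r ≤ j := by
  have hz : Q.parts r < P.parts r ↔ zpos Q r < zpos P r := by
    simp [zpos]
  rw [hz]
  rcases lt_or_ge r i with hri | hri
  · simp [h.zpos_of_lt r hri, hri.not_ge]
  rcases lt_trichotomy r j with hrj | rfl | hrj
  · simpa [h.zpos_of_le_of_lt r hri hrj, hri, hrj.le] using zpos_strictAnti P r.lt_succ_self
  · simpa [hri] using h.zpos_bot_lt
  · simp [h.zpos_of_gt r hrj, hrj.not_ge]

theorem parts_le (h : IsRimHookOn P Q i j t) : Q ≤ P := fun r ↦ by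
  by_contra! hlt
  rcases lt_or_ge r i with hri | hri
  · have := h.zpos_of_lt r hri
    simp only [zpos] at this
    lia
  rcases le_or_gt r j with hrj | hrj
  · exact hlt.not_gt ((h.parts_lt_iff r).2 ⟨hri, hrj⟩)
  · have := h.zpos_of_gt r hrj
    simp only [zpos] at this
    lia

theorem rowCount_skew (h : IsRimHookOn P Q i j t) : rowCount (P.skew Q) - 1 = j - i := by
  have himage : Prod.fst '' P.skew Q = Finset.Icc i j := by
    ext r
    simp only [Set.mem_image, Prod.exists, exists_and_right, exists_eq_right, Partition.mem_skew,
      Finset.coe_Icc, Set.mem_Icc, ← h.parts_lt_iff]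
    exact ⟨fun ⟨c, hc⟩ ↦ hc.1.trans_lt hc.2, fun hr ↦ ⟨_, le_rfl, hr⟩⟩
  rw [rowCount, himage, Set.ncard_coe_finset, Nat.card_Icc]
  lia

theorem ncard_skew (h : IsRimHookOn P Q i j t) : (P.skew Q).ncard = t := by
  have hle := h.parts_le
  have hrows (r : ℕ) (hr : Q.parts r < P.parts r) : r ∈ Finset.Ico i (j + 1) := by
    have := (h.parts_lt_iff r).1 hr
    simp only [Finset.mem_Ico]
    lia
  zify
  calc ((P.skew Q).ncard : ℤ)
      = ∑ r ∈ Finset.Ico i (j + 1), (zpos P r - zpos Q r) := by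
        rw [Partition.ncard_skew hrows, Nat.cast_sum]
        refine Finset.sum_congr rfl fun r _ ↦ ?_
        rw [Nat.cast_sub (hle r)]
        simp only [zpos]
        ring
    _ = ∑ r ∈ Finset.Ico i j, (zpos P r - zpos P (r + 1)) + (zpos P j - zpos Q j) := by
        rw [Finset.sum_Ico_succ_top h.le]
        congr 1
        refine Finset.sum_congr rfl fun r hr ↦ ?_
        rw [Finset.mem_Ico] at hr
        rw [h.zpos_of_le_of_lt r hr.1 hr.2]
    _ = t := by
        have := Finset.sum_Ico_sub (zpos P) h.le
        rw [← neg_inj, ← Finset.sum_neg_distrib] at this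
        simp only [neg_sub] at this
        rw [this, h.zpos_bot]
        ring

end IsRimHookOn

theorem Adj.symm {c d : ℕ × ℕ} (h : Adj c d) : Adj d c := by
  simp only [Adj] at *
  lia

theorem isConnectedSet_of_forall_reflTransGen {S : Set (ℕ × ℕ)} {e : ℕ × ℕ}
    (h : ∀ c ∈ S, Relation.ReflTransGen (fun x y ↦ x ∈ S ∧ y ∈ S ∧ Adj x y) c e) :
    IsConnectedSet S := by
  have : Std.Symm fun x y ↦ x ∈ S ∧ y ∈ S ∧ Adj x y := ⟨fun _ _ h ↦ ⟨h.2.1, h.1, h.2.2.symm⟩⟩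
  exact fun c hc d hd ↦ (h c hc).trans (Std.Symm.symm _ _ (h d hd))

theorem exists_mem_mem_succ_of_reflTransGen {S : Set (ℕ × ℕ)} {c d : ℕ × ℕ}
    (h : Relation.ReflTransGen (fun x y ↦ x ∈ S ∧ y ∈ S ∧ Adj x y) c d) {r : ℕ}
    (hc : c.1 ≤ r) (hd : r < d.1) : ∃ y, (r, y) ∈ S ∧ (r + 1, y) ∈ S := by
  induction h with
  | refl => exact absurd hd hc.not_gt
  | @tail x z _ hxz ih =>
    rcases lt_or_ge r x.1 with hx | hx
    · exact ih hx
    · obtain ⟨hxS, hzS, hadj⟩ := hxz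
      obtain ⟨x₁, x₂⟩ := x
      obtain ⟨z₁, z₂⟩ := z
      simp only [Adj] at hadj hx hd
      obtain rfl : x₁ = r := by lia
      obtain rfl : z₁ = x₁ + 1 := by lia
      obtain rfl : x₂ = z₂ := by lia
      exact ⟨x₂, hxS, hzS⟩

theorem Partition.reflTransGen_skew_row {P Q : Partition} {r c : ℕ} (h : (r, c) ∈ P.skew Q) :
    Relation.ReflTransGen (fun x y ↦ x ∈ P.skew Q ∧ y ∈ P.skew Q ∧ Adj x y)
      (r, c) (r, Q.parts r) := by
  obtain ⟨hQ, hP⟩ := mem_skew.1 h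
  induction c, hQ using Nat.le_induction with
  | base => rfl
  | succ c hQ ih =>
    have hc : (r, c) ∈ P.skew Q := mem_skew.2 ⟨hQ, by lia⟩
    exact .head ⟨h, hc, .inl ⟨rfl, .inr rfl⟩⟩ (ih hc (by lia))

namespace IsRimHookOn

variable {P Q : Partition} {i j t : ℕ}

theorem parts_add_one (h : IsRimHookOn P Q i j t) {r : ℕ} (hi : i ≤ r) (hj : r < j) :
    Q.parts r + 1 = P.parts (r + 1) := by
  have := h.zpos_of_le_of_lt r hi hj
  simp only [zpos] at this
  lia

theorem isConnectedSet_skew (h : IsRimHookOn P Q i j t) : IsConnectedSet (P.skew Q) := by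
  refine isConnectedSet_of_forall_reflTransGen (e := (j, Q.parts j)) fun ⟨r, c⟩ hrc ↦ ?_
  have hr (r c : ℕ) (hrc : (r, c) ∈ P.skew Q) : i ≤ r ∧ r ≤ j :=
    (h.parts_lt_iff r).1 ((Partition.mem_skew.1 hrc).1.trans_lt (Partition.mem_skew.1 hrc).2)
  have hrj := (hr r c hrc).2
  induction hrj using Nat.decreasingInduction generalizing c with
  | self => exact Partition.reflTransGen_skew_row hrc
  | of_succ r hrj ih =>
    have hPr := (h.parts_lt_iff r).2 ⟨(hr r c hrc).1, hrj.le⟩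
    have hbelow : (r + 1, Q.parts r) ∈ P.skew Q :=
      Partition.mem_skew.2 ⟨Q.antitone r.le_succ, by
        rw [← h.parts_add_one (hr r c hrc).1 hrj]; lia⟩
    exact (Partition.reflTransGen_skew_row hrc).trans
      (.head ⟨Partition.mem_skew.2 ⟨le_rfl, hPr⟩, hbelow, .inr ⟨rfl, .inl rfl⟩⟩ (ih _ hbelow))

theorem noSquare_skew (h : IsRimHookOn P Q i j t) : NoSquare (P.skew Q) := by
  rintro ⟨r, c, h₁, h₂, -, h₄⟩
  rw [Partition.mem_skew] at h₁ h₂ h₄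
  have hr := (h.parts_lt_iff r).1 (by lia)
  have hr' := (h.parts_lt_iff (r + 1)).1 (by lia)
  have := h.parts_add_one hr.1 hr'.2
  lia

theorem isRimHook (h : IsRimHookOn P Q i j t) : IsRimHook P Q t :=
  ⟨h.parts_le,
    ⟨(j, Q.parts j), Partition.mem_skew.2 ⟨le_rfl, (h.parts_lt_iff j).2 ⟨h.le, le_rfl⟩⟩⟩,
    h.isConnectedSet_skew, h.noSquare_skew, h.ncard_skew⟩

end IsRimHookOn

/-- Connectedness makes consecutive rows overlap in at least one column, the absence of squares in
at most one. -/
theorem IsRimHook.parts_add_one {P Q : Partition} {i j t r : ℕ} (h : IsRimHook P Q t)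
    (hi : Q.parts i < P.parts i) (hj : Q.parts j < P.parts j) (hir : i ≤ r) (hrj : r < j) :
    Q.parts r + 1 = P.parts (r + 1) := by
  obtain ⟨-, -, hconn, hsq, -⟩ := h
  have hpath := hconn (i, Q.parts i) (Partition.mem_skew.2 ⟨le_rfl, hi⟩) (j, Q.parts j)
    (Partition.mem_skew.2 ⟨le_rfl, hj⟩)
  obtain ⟨c, hc, hc'⟩ := exists_mem_mem_succ_of_reflTransGen hpath hir hrj
  rw [Partition.mem_skew] at hc hc'
  by_contra hne
  have hQ := Q.antitone r.le_succ
  have hP := P.antitone r.le_succ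
  refine hsq ⟨r, Q.parts r, ?_⟩
  simp only [Partition.mem_skew]
  lia

theorem IsRimHook.exists_isRimHookOn {P Q : Partition} {t : ℕ} (h : IsRimHook P Q t) :
    ∃ i j, IsRimHookOn P Q i j t := by
  obtain ⟨N, hN⟩ := P.eventually_zero
  set rows : Finset ℕ := {r ∈ Finset.range N | Q.parts r < P.parts r} with hrows
  have hmem (r : ℕ) : r ∈ rows ↔ Q.parts r < P.parts r := by
    simp only [hrows, Finset.mem_filter, Finset.mem_range, and_iff_right_iff_imp]
    intro hr
    by_contra! hNr
    simp [hN r hNr] at hr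
  obtain ⟨⟨r, c⟩, hrc⟩ := h.2.1
  have hne : rows.Nonempty :=
    ⟨r, (hmem r).2 ((Partition.mem_skew.1 hrc).1.trans_lt (Partition.mem_skew.1 hrc).2)⟩
  obtain ⟨i, hi, hmin⟩ := rows.exists_min_image id hne
  obtain ⟨j, hj, hmax⟩ := rows.exists_max_image id hne
  simp only [hmem, id] at hi hj hmin hmax
  have hPQ : P.parts j ≤ P.parts i := P.antitone (hmin j hj)
  have hout (r : ℕ) (hr : r < i ∨ j < r) : zpos Q r = zpos P r := by
    have := mt (hmin r)
    have := mt (hmax r)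
    have := h.1 r
    simp only [zpos]
    lia
  have hon : IsRimHookOn P Q i j (zpos P i - zpos Q j).toNat :=
    { pos := by simp only [zpos]; have := hmin j hj; lia
      le := hmin j hj
      zpos_of_lt := fun r hr ↦ hout r (.inl hr)
      zpos_of_le_of_lt := fun r hir hrj ↦ by
        have := h.parts_add_one hi hj hir hrj
        simp only [zpos]
        lia
      zpos_bot := by simp only [zpos]; have := hmin j hj; lia
      zpos_of_gt := fun r hr ↦ hout r (.inr hr) }
  have ht : (zpos P i - zpos Q j).toNat = t := hon.ncard_skew.symm.trans h.2.2.2.2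
  exact ⟨i, j, ht ▸ hon⟩

namespace IsRimHookOn

variable {P Q Q' : Partition} {i i' j j' t : ℕ}

theorem head_eq (h : IsRimHookOn P Q i j t) (h' : IsRimHookOn P Q i' j' t) : i = i' := by
  have hi := (h'.parts_lt_iff i).1 ((h.parts_lt_iff i).2 ⟨le_rfl, h.le⟩)
  have hi' := (h.parts_lt_iff i').1 ((h'.parts_lt_iff i').2 ⟨le_rfl, h'.le⟩)
  lia

theorem bot_lt {k : ℕ} (h : IsRimHookOn P Q i j t)
    (hP : ∀ i, k ≤ i → P.parts i = 0) : j < k := by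
  by_contra! hkj
  have := (h.parts_lt_iff j).2 ⟨h.le, le_rfl⟩
  simp [hP j hkj] at this

theorem bot_le (h : IsRimHookOn P Q i j t) (h' : IsRimHookOn P Q' i j' t) : j' ≤ j := by
  by_contra! hlt
  have hQ' := h'.zpos_of_le_of_lt j h.le hlt
  have hbot := h.zpos_bot.trans h'.zpos_bot.symm
  have := h.zpos_of_gt (j + 1) j.lt_succ_self
  have := zpos_strictAnti Q j.lt_succ_self
  have := zpos_strictAnti Q' hlt
  lia

theorem eq_of_head_eq (h : IsRimHookOn P Q i j t) (h' : IsRimHookOn P Q' i j' t) : Q = Q' := by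
  obtain rfl := (h'.bot_le h).antisymm (h.bot_le h')
  refine zpos_injective (funext fun r ↦ ?_)
  rcases lt_or_ge r i with hri | hri
  · rw [h.zpos_of_lt r hri, h'.zpos_of_lt r hri]
  rcases lt_trichotomy r j with hrj | rfl | hrj
  · rw [h.zpos_of_le_of_lt r hri hrj, h'.zpos_of_le_of_lt r hri hrj]
  · rw [h.zpos_bot, h'.zpos_bot]
  · rw [h.zpos_of_gt r hrj, h'.zpos_of_gt r hrj]

end IsRimHookOn

theorem exists_isRimHookOn {P : Partition} {i t : ℕ} (ht : 0 < t)
    (h : ∀ r, zpos P r ≠ zpos P i - t) : ∃ Q j, IsRimHookOn P Q i j t := by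
  obtain ⟨N, hN⟩ := P.eventually_zero
  have hzpos (r : ℕ) (hr : N ≤ r) : zpos P r = -r - 1 := by simp [zpos, hN r hr]
  have hbelow : ∃ r, zpos P r < zpos P i - t := by
    refine ⟨max N (zpos P i - t).natAbs, ?_⟩
    rw [hzpos _ (le_max_left _ _)]
    lia
  obtain ⟨j, hj⟩ : ∃ j, Nat.find hbelow = j + 1 := by
    refine Nat.exists_eq_succ_of_ne_zero fun h₀ ↦ ?_
    have := h₀ ▸ Nat.find_spec hbelow
    have := (zpos_strictAnti P).antitone i.zero_le
    lia
  have hsucc : zpos P (j + 1) < zpos P i - t := hj ▸ Nat.find_spec hbelow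
  have hbot : zpos P i - t < zpos P j :=
    (not_lt.1 (Nat.find_min hbelow (by lia))).lt_of_ne' (h j)
  have hij : i ≤ j := Nat.lt_succ_iff.1 ((zpos_strictAnti P).lt_iff_gt.1 (by lia))
  let f (r : ℕ) : ℤ :=
    if r < i then zpos P r else if r < j then zpos P (r + 1) else
      if r = j then zpos P i - t else zpos P r
  have hf : StrictAnti f := strictAnti_nat_of_succ_lt fun r ↦ by
    have := zpos_strictAnti P r.lt_succ_self
    have := zpos_strictAnti P (r + 1).lt_succ_self
    grind
  obtain ⟨Q, hQ⟩ := exists_zpos_eq hf (N := max N (j + 1)) fun r hr ↦ by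
    have := hzpos r (by lia)
    grind
  exact ⟨Q, j, ht, hij, by grind, by grind, by grind, by grind⟩

/-! ### Beta numbers -/

/-- The exponent `λ + δ` of `λ = P` in `k` variables, where `δ = (k - 1, …, 1, 0)`. It determines
`P` only if `P` has at most `k` parts; `δ` itself is `beta k Partition.empty`. -/
noncomputable def beta (k : ℕ) (P : Partition) : Fin k →₀ ℕ :=
  Finsupp.equivFunOnFinite.symm fun i ↦ P.parts i + i.rev

theorem beta_apply {k : ℕ} (P : Partition) (i : Fin k) : beta k P i = P.parts i + i.rev := rfl

theorem coe_beta_apply {k : ℕ} (P : Partition) (i : Fin k) : (beta k P i : ℤ) = zpos P i + k := by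
  rw [beta_apply, zpos, Fin.val_rev, Nat.cast_add, Nat.cast_sub i.isLt]
  push_cast
  ring

theorem beta_strictAnti (k : ℕ) (P : Partition) : StrictAnti (beta k P) := fun i j hij ↦ by
  have := zpos_strictAnti P (Fin.lt_def.1 hij)
  zify
  simpa [coe_beta_apply]

theorem beta_empty_lt {k : ℕ} (i : Fin k) : beta k Partition.empty i < k := by
  simpa [beta_apply, Partition.empty] using i.rev.isLt

theorem eq_of_beta_eq {k : ℕ} {P Q : Partition} (hP : ∀ i, k ≤ i → P.parts i = 0)
    (hQ : ∀ i, k ≤ i → Q.parts i = 0) (h : beta k P = beta k Q) : P = Q := by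
  refine zpos_injective (funext fun r ↦ ?_)
  rcases lt_or_ge r k with hr | hr
  · have := DFunLike.congr_fun h ⟨r, hr⟩
    zify at this
    simpa [coe_beta_apply] using this
  · rw [zpos, zpos, hP r hr, hQ r hr]

theorem degree_beta {k : ℕ} {P : Partition} (hP : ∀ i, k ≤ i → P.parts i = 0) :
    (beta k P).degree = P.size + (beta k Partition.empty).degree := by
  have hsize : P.size = ∑ i : Fin k, P.parts i := by
    rw [Partition.size, finsum_eq_sum_of_support_subset (s := Finset.range k), Finset.sum_range]
    intro i hi
    simpa using mt (hP i) hi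
  simp [hsize, Finsupp.degree_eq_sum, beta_apply, Partition.empty, Finset.sum_add_distrib]

theorem IsRimHookOn.beta_eq {k : ℕ} {P Q : Partition} {i j : Fin k} {t : ℕ}
    (h : IsRimHookOn P Q i j t) :
    beta k P = (beta k Q).mapDomain (Fin.cycleIcc i j) + Finsupp.single i t := by
  obtain ⟨n, rfl⟩ : ∃ n, k = n + 1 := Nat.exists_eq_succ_of_ne_zero (by have := i.2; lia)
  have hij : i ≤ j := h.le
  ext r
  obtain ⟨r, rfl⟩ := (Fin.cycleIcc i j).surjective r
  rw [Finsupp.add_apply, Finsupp.mapDomain_apply (Fin.cycleIcc i j).injective]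
  zify
  rw [coe_beta_apply, coe_beta_apply]
  rcases lt_or_ge r i with hri | hri
  · rw [Fin.cycleIcc_of_lt hri, h.zpos_of_lt r hri, Finsupp.single_eq_of_ne hri.ne]
    simp
  rcases lt_trichotomy r j with hrj | rfl | hrj
  · have hval : ((r + 1 : Fin (n + 1)) : ℕ) = r + 1 :=
      Fin.val_add_one_of_lt (hrj.trans_le (Fin.le_last j))
    have hne : r + 1 ≠ i := fun he ↦ by
      have := congrArg Fin.val he
      have := Fin.le_def.1 hri
      lia
    rw [Fin.cycleIcc_of_ge_of_lt hri hrj, h.zpos_of_le_of_lt r hri hrj, hval,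
      Finsupp.single_eq_of_ne hne]
    simp
  · rw [Fin.cycleIcc_of_last hij, Finsupp.single_eq_same, h.zpos_bot]
    ring
  · rw [Fin.cycleIcc_of_gt hrj, h.zpos_of_gt r hrj, Finsupp.single_eq_of_ne (hij.trans_lt hrj).ne']
    simp

theorem IsStep.le {P Q : Partition} {t : ℕ} (h : IsStep P Q t) : Q ≤ P := by
  rcases h with ⟨-, rfl⟩ | ⟨-, h⟩
  · exact fun _ ↦ le_rfl
  · exact h.1

section Coefficients

variable {k : ℕ} {R : Type*} [CommRing R]

theorem coeff_beta_alternant_empty {P : Partition} (hP : ∀ i, k ≤ i → P.parts i = 0)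
    [Decidable (P = Partition.empty)] :
    coeff (beta k P) (alternant R (beta k Partition.empty)) =
      if P = Partition.empty then 1 else 0 := by
  split_ifs with h
  · rw [h]
    simpa using coeff_alternant_mapDomain (R := R) (beta_strictAnti k Partition.empty).injective 1
  · rw [coeff_alternant]
    refine Finset.sum_eq_zero fun σ _ ↦ if_neg fun hσ ↦ h ?_
    refine (eq_of_beta_eq (fun _ _ ↦ rfl) hP (DFunLike.coe_injective ?_)).symm
    refine ((beta_strictAnti k Partition.empty).range_inj (beta_strictAnti k P)).1 ?_
    have hcomp : ⇑(beta k P) = beta k Partition.empty ∘ σ.symm := by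
      rw [← hσ]
      exact funext (Finsupp.mapDomain_equiv_apply _)
    rw [hcomp, σ.symm.surjective.range_comp]

theorem IsRimHookOn.coeff_beta_sub_single {P Q : Partition} {i j : Fin k} {t : ℕ}
    (h : IsRimHookOn P Q i j t) {f : MvPolynomial (Fin k) R} (hf : IsAlternating f) :
    coeff (beta k P - Finsupp.single i t) f =
      (-1) ^ (rowCount (P.skew Q) - 1) * coeff (beta k Q) f := by
  rw [h.beta_eq, add_tsub_cancel_right, hf.coeff_mapDomain, Fin.sign_cycleIcc_of_le h.le,
    h.rowCount_skew]
  simp [Units.smul_def]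

theorem exists_isRimHookOn_of_coeff_ne_zero [IsAddTorsionFree R] {P : Partition}
    (hP : ∀ i, k ≤ i → P.parts i = 0) {f : MvPolynomial (Fin k) R} (hf : IsAlternating f)
    {i : Fin k} {t : ℕ} (ht : 0 < t) (hi : t ≤ beta k P i)
    (h : coeff (beta k P - Finsupp.single i t) f ≠ 0) : ∃ Q j, IsRimHookOn P Q i j t := by
  have hinj := not_imp_comm.1 hf.coeff_eq_zero h
  refine exists_isRimHookOn ht fun r hr ↦ ?_
  rcases lt_or_ge r k with hrk | hrk
  · obtain rfl | hne := eq_or_ne i ⟨r, hrk⟩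
    · lia
    · refine hne.symm (hinj ?_)
      simp only [Finsupp.tsub_apply, Finsupp.single_eq_same, Finsupp.single_eq_of_ne hne.symm,
        tsub_zero]
      zify [hi]
      rw [coe_beta_apply, coe_beta_apply, hr]
      ring
  · zify at hi
    rw [coe_beta_apply] at hi
    simp only [zpos, hP r hrk] at hr hi
    lia

end Coefficients

/-! ### The Murnaghan–Nakayama sum -/

theorem Partition.finite_le (P : Partition) : Finite {Q : Partition // Q ≤ P} := by
  obtain ⟨N, hN⟩ := P.eventually_zero
  have hbeta (Q : {Q : Partition // Q ≤ P}) : beta N Q.1 ≤ beta N P :=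
    fun i ↦ Nat.add_le_add_right (Q.2 i) _
  refine Finite.of_injective (β := Set.Iic (beta N P)) (fun Q ↦ ⟨beta N Q.1, hbeta Q⟩)
    fun Q Q' h ↦ Subtype.ext (eq_of_beta_eq ?_ ?_ (congrArg Subtype.val h))
  · exact fun i hi ↦ Nat.eq_zero_of_le_zero (hN i hi ▸ Q.2 i)
  · exact fun i hi ↦ Nat.eq_zero_of_le_zero (hN i hi ▸ Q'.2 i)

noncomputable instance (P : Partition) (t : ℕ) : Fintype {Q // IsStep P Q t} :=
  have := P.finite_le
  have := Finite.of_injective (fun Q : {Q // IsStep P Q t} ↦ (⟨Q.1, Q.2.le⟩ : {Q // Q ≤ P}))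
    fun _ _ h ↦ Subtype.ext (Subtype.mk.inj h)
  .ofFinite _

theorem IsStep.exists_isRimHookOn {P Q : Partition} {t : ℕ} (h : IsStep P Q t) (ht : 0 < t) :
    ∃ i j, IsRimHookOn P Q i j t := by
  rcases h with ⟨rfl, -⟩ | ⟨-, h⟩
  · exact absurd ht (lt_irrefl 0)
  · exact h.exists_isRimHookOn

/-- Removing a hook from row `i` subtracts `t` from the `i`-th beta number and sorts the result,
so only the rows in which the subtraction creates no coincidence contribute on the right. -/
theorem sum_isStep_mul_coeff_beta {k : ℕ} {R : Type*} [CommRing R] [IsAddTorsionFree R]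
    {P : Partition} (hP : ∀ i, k ≤ i → P.parts i = 0) {t : ℕ} (ht : 0 < t)
    {f : MvPolynomial (Fin k) R} (hf : IsAlternating f) :
    ∑ Q : {Q // IsStep P Q t}, (-1) ^ (rowCount (P.skew Q.1) - 1) * coeff (beta k Q.1) f =
      coeff (beta k P) (psum (Fin k) R t * f) := by
  have hrows (Q : {Q // IsStep P Q t}) : ∃ i j : Fin k, IsRimHookOn P Q.1 i j t := by
    obtain ⟨i, j, h⟩ := Q.2.exists_isRimHookOn ht
    have hj := h.bot_lt hP
    exact ⟨⟨i, h.le.trans_lt hj⟩, ⟨j, hj⟩, h⟩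
  choose head bot hhook using hrows
  have hinj : Function.Injective head := fun Q Q' h ↦
    Subtype.ext ((hhook Q).eq_of_head_eq (h ▸ hhook Q'))
  rw [coeff_psum_mul]
  refine Fintype.sum_of_injective head hinj _ _ (fun i hi ↦ ?_) fun Q ↦ ?_
  · by_contra hne
    obtain ⟨hti, hne⟩ := ite_ne_right_iff.1 hne
    obtain ⟨Q, j, h⟩ := exists_isRimHookOn_of_coeff_ne_zero hP hf ht hti hne
    let Q' : {Q // IsStep P Q t} := ⟨Q, .inr ⟨ht, h.isRimHook⟩⟩
    exact hi ⟨Q', Fin.ext ((hhook Q').head_eq h)⟩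
  · have hle : t ≤ beta k P (head Q) := by simp [(hhook Q).beta_eq]
    rw [if_pos hle, (hhook Q).coeff_beta_sub_single hf]

/-- Rim hook tableaux of shape `P` whose type `μ` is a family indexed by `Fin n` instead of a list,
so that the last hook can be split off. -/
def RimHookChain {n : ℕ} (μ : Fin n → ℕ) (P : Partition) : Type :=
  {c : Fin (n + 1) → Partition // c 0 = Partition.empty ∧ c (Fin.last n) = P ∧
    ∀ j : Fin n, IsStep (c j.succ) (c j.castSucc) (μ j)}

namespace RimHookChain

variable {n : ℕ} {P : Partition}

/-- The number of rows minus one, summed over the hooks of a chain. -/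
noncomputable def height {μ : Fin n → ℕ} (c : RimHookChain μ P) : ℕ :=
  ∑ j : Fin n, (rowCount ((c.1 j.succ).skew (c.1 j.castSucc)) - 1)

theorem chain_last {μ : Fin n → ℕ} (c : RimHookChain μ P) : c.1 (Fin.last n) = P := c.2.2.1

variable {μ : Fin (n + 1) → ℕ}

/-- Appends the last hook to a chain ending in the partition left after its removal. -/
def snoc (Q : {Q // IsStep P Q (μ (Fin.last n))}) (c : RimHookChain (Fin.init μ) Q.1) :
    RimHookChain μ P :=
  ⟨Fin.snoc (α := fun _ ↦ Partition) c.1 P,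
    (Fin.snoc_castSucc (α := fun _ ↦ Partition) P c.1 0).trans c.2.1,
    Fin.snoc_last (α := fun _ ↦ Partition) P c.1, by
      refine Fin.lastCases ?_ fun j ↦ ?_
      · rw [Fin.succ_last, Fin.snoc_last, Fin.snoc_castSucc, c.chain_last]
        exact Q.2
      · rw [Fin.succ_castSucc, Fin.snoc_castSucc, Fin.snoc_castSucc]
        exact c.2.2.2 j⟩

theorem snoc_bijective :
    Function.Bijective
      fun x : Σ Q : {Q // IsStep P Q (μ (Fin.last n))}, RimHookChain (Fin.init μ) Q.1 ↦
        snoc x.1 x.2 := by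
  constructor
  · rintro ⟨⟨Q, hQ⟩, c⟩ ⟨⟨Q', hQ'⟩, c'⟩ h
    have hc : c.1 = c'.1 := ((Fin.snoc_inj (α := fun _ ↦ Partition)).1 (congrArg Subtype.val h)).1
    obtain rfl : Q = Q' := c.chain_last.symm.trans ((congrFun hc _).trans c'.chain_last)
    rw [Subtype.ext hc]
  · rintro ⟨c, h₀, rfl, hc⟩
    have hlast := hc (Fin.last n)
    rw [Fin.succ_last] at hlast
    exact ⟨⟨⟨_, hlast⟩, Fin.init c, h₀, rfl, fun j ↦ hc j.castSucc⟩,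
      Subtype.ext (Fin.snoc_init_self c)⟩

theorem height_snoc (Q : {Q // IsStep P Q (μ (Fin.last n))})
    (c : RimHookChain (Fin.init μ) Q.1) :
    (snoc Q c).height = rowCount (P.skew Q.1) - 1 + c.height := by
  simp [add_comm, height, snoc, Fin.sum_univ_castSucc, Fin.succ_castSucc, -Fin.castSucc_succ,
    c.chain_last]

instance instSubsingleton (μ : Fin 0 → ℕ) (P : Partition) : Subsingleton (RimHookChain μ P) :=
  ⟨fun c c' ↦ Subtype.ext (funext fun j ↦ by rw [Fin.fin_one_eq_zero j, c.2.1, c'.2.1])⟩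

theorem finite (μ : Fin n → ℕ) (P : Partition) : Finite (RimHookChain μ P) := by
  induction n generalizing P with
  | zero => exact Finite.of_subsingleton
  | succ n ih =>
    have (Q : {Q // IsStep P Q (μ (Fin.last n))}) := ih (Fin.init μ) Q.1
    exact Finite.of_surjective _ snoc_bijective.2

noncomputable instance (μ : Fin n → ℕ) (P : Partition) : Fintype (RimHookChain μ P) :=
  have := finite μ P
  .ofFinite _

theorem sum_neg_one_pow_height_zero {R : Type*} [Ring R] (μ : Fin 0 → ℕ) (P : Partition)
    [Decidable (P = Partition.empty)] :
    ∑ c : RimHookChain μ P, (-1 : R) ^ c.height = if P = Partition.empty then 1 else 0 := by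
  split_ifs with hP
  · subst hP
    rw [Fintype.sum_subsingleton _ ⟨fun _ ↦ Partition.empty, rfl, rfl, nofun⟩]
    simp [height]
  · have : IsEmpty (RimHookChain μ P) := ⟨fun c ↦ hP (c.chain_last.symm.trans c.2.1)⟩
    simp

theorem sum_neg_one_pow_height_succ {R : Type*} [Ring R] (μ : Fin (n + 1) → ℕ) (P : Partition) :
    ∑ c : RimHookChain μ P, (-1 : R) ^ c.height =
      ∑ Q : {Q // IsStep P Q (μ (Fin.last n))}, (-1) ^ (rowCount (P.skew Q.1) - 1) *
        ∑ c : RimHookChain (Fin.init μ) Q.1, (-1) ^ c.height := by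
  rw [← Fintype.sum_bijective _ snoc_bijective _ _ fun _ ↦ rfl, Fintype.sum_sigma]
  simp only [height_snoc, pow_add, Finset.mul_sum]

theorem sum_neg_one_pow_height {R : Type*} [CommRing R] [IsAddTorsionFree R] {k : ℕ}
    {μ : Fin n → ℕ} (hμ : ∀ j, 0 < μ j) (hP : ∀ i, k ≤ i → P.parts i = 0) :
    ∑ c : RimHookChain μ P, (-1 : R) ^ c.height =
      coeff (beta k P) (alternant R (beta k Partition.empty) * ∏ j, psum (Fin k) R (μ j)) := by
  classical
  induction n generalizing P with
  | zero =>
    rw [sum_neg_one_pow_height_zero, Fin.prod_univ_zero, mul_one, coeff_beta_alternant_empty hP]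
  | succ n ih =>
    have hsymm : (∏ j : Fin n, psum (Fin k) R (Fin.init μ j)).IsSymmetric :=
      prod_mem (S := symmetricSubalgebra (Fin k) R) fun j _ ↦ psum_isSymmetric _ _ _
    have hQ (Q : {Q // IsStep P Q (μ (Fin.last n))}) (i : ℕ) (hi : k ≤ i) : Q.1.parts i = 0 :=
      Nat.eq_zero_of_le_zero (hP i hi ▸ Q.2.le i)
    calc ∑ c : RimHookChain μ P, (-1 : R) ^ c.height
        = ∑ Q : {Q // IsStep P Q (μ (Fin.last n))}, (-1) ^ (rowCount (P.skew Q.1) - 1) *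
            coeff (beta k Q.1) (alternant R (beta k Partition.empty) *
              ∏ j : Fin n, psum (Fin k) R (Fin.init μ j)) := by
          rw [sum_neg_one_pow_height_succ]
          exact Finset.sum_congr rfl fun Q _ ↦ by
            rw [ih (μ := Fin.init μ) (fun j ↦ hμ j.castSucc) (hQ Q)]
      _ = coeff (beta k P) (psum (Fin k) R (μ (Fin.last n)) *
            (alternant R (beta k Partition.empty) *
              ∏ j : Fin n, psum (Fin k) R (Fin.init μ j))) :=
          sum_isStep_mul_coeff_beta hP (hμ _)
            ((isAlternating_alternant _).mul_isSymmetric hsymm)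
      _ = _ := by
          rw [Fin.prod_univ_castSucc, ← mul_assoc _ _ (psum _ _ _), mul_comm (psum _ _ _)]
          rfl

end RimHookChain

/-- Rim hook tableaux of list type as chains. -/
def rhtEquiv (P : Partition) (μ : List ℕ) : RHT P μ ≃ RimHookChain μ.get P where
  toFun T := ⟨T.chain, T.chain_zero, T.chain_last, T.step⟩
  invFun c := ⟨c.1, c.2.1, c.2.2.1, c.2.2.2⟩

theorem chi_eq_sum_rimHookChain (P : Partition) (m : Multiset ℕ) :
    chi P m = ∑ c : RimHookChain (typeList m).get P, (-1) ^ c.height := by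
  rw [chi, chiAux, ← finsum_eq_sum_of_fintype]
  exact finsum_eq_of_bijective _ (rhtEquiv P (typeList m)).bijective fun _ ↦ rfl

theorem coe_typeList (m : Multiset ℕ) : (typeList m : Multiset ℕ) = m := by
  rw [typeList, Multiset.coe_reverse, Multiset.sort_eq]

theorem chi_eq_coeff {R : Type*} [CommRing R] [IsAddTorsionFree R] {k : ℕ} {P : Partition}
    (hP : ∀ i, k ≤ i → P.parts i = 0) {m : Multiset ℕ} (hm : ∀ j ∈ m, 0 < j) :
    (chi P m : R) =
      coeff (beta k P)
        (alternant R (beta k Partition.empty) * (m.map (psum (Fin k) R)).prod) := by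
  have hprod : (m.map (psum (Fin k) R)).prod =
      ∏ j, psum (Fin k) R ((typeList m).get j) := by
    conv_lhs => rw [← coe_typeList m]
    simp [Fin.prod_univ_fun_getElem]
  have hpos (j) : 0 < (typeList m).get j :=
    hm _ (by simpa [typeList] using List.get_mem (typeList m) j)
  rw [hprod, ← RimHookChain.sum_neg_one_pow_height hpos hP, chi_eq_sum_rimHookChain]
  push_cast
  rfl

/-! ### Reduction modulo `k` -/

theorem sum_chi_map_mul_eq_coeff {k : ℕ} (hk : k ≠ 0) (p : ℕ) {P : Partition}
    (hP : ∀ i, k ≤ i → P.parts i = 0) :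
    ∑ μ : Nat.Partition p, (1 / (zpart μ.parts : ℚ)) * (chi P (μ.parts.map fun x ↦ k * x) : ℚ) =
      coeff (beta k P)
        (alternant ℚ (beta k Partition.empty) * expand k (hsymm (Fin k) ℚ p)) := by
  rw [hsymm_eq_sum_partition, map_sum, Finset.mul_sum, coeff_sum]
  refine Finset.sum_congr rfl fun μ _ ↦ ?_
  have hpos (j) (hj : j ∈ μ.parts.map fun x ↦ k * x) : 0 < j := by
    obtain ⟨i, hi, rfl⟩ := Multiset.mem_map.1 hj
    exact Nat.mul_pos hk.pos (μ.parts_pos hi)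
  rw [chi_eq_coeff hP hpos, map_smul, mul_smul_comm, coeff_smul, smul_eq_mul, map_multiset_prod,
    Multiset.map_map, Multiset.map_map]
  simp only [Function.comp_def, expand_psum]

/-- The exponent `λ + δ` with each entry reduced to its remainder modulo `k`. -/
noncomputable def betaResidue (k : ℕ) (P : Partition) : Fin k →₀ ℕ :=
  (beta k P).mapRange (· % k) (Nat.zero_mod k)

theorem sum_chi_map_mul_eq_coeff_alternant {k p : ℕ} (hk : k ≠ 0) {P : Partition}
    (hP : ∀ i, k ≤ i → P.parts i = 0) (hsize : P.size = k * p) :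
    ∑ μ : Nat.Partition p, (1 / (zpart μ.parts : ℚ)) * (chi P (μ.parts.map fun x ↦ k * x) : ℚ) =
      coeff (betaResidue k P) (alternant ℚ (beta k Partition.empty)) := by
  rw [sum_chi_map_mul_eq_coeff hk p hP]
  exact coeff_alternant_mul_expand_hsymm hk beta_empty_lt (hsize ▸ degree_beta hP)

theorem natCast_beta {k : ℕ} (P : Partition) (i : Fin k) :
    (beta k P i : ZMod k) = P.parts i - 1 - (i : ℕ) := by
  rw [← Int.cast_natCast, coe_beta_apply, zpos]
  simp [sub_right_comm]

theorem betaResidue_injective_iff {k : ℕ} {P : Partition} :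
    Function.Injective (betaResidue k P) ↔
      Function.Injective fun i : Fin k ↦ (P.parts i - 1 - (i : ℕ) : ZMod k) := by
  have h (i j : Fin k) : betaResidue k P i = betaResidue k P j ↔
      (P.parts i - 1 - (i : ℕ) : ZMod k) = P.parts j - 1 - (j : ℕ) := by
    rw [← natCast_beta, ← natCast_beta, ZMod.natCast_eq_natCast_iff']
    rfl
  simp only [Function.Injective, h]

theorem natCast_finRotate_pow (n p : ℕ) (i : Fin n) :
    (((finRotate n ^ p) i : ℕ) : ZMod n) = (i : ℕ) + p := by
  induction p with
  | zero => simp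
  | succ p ih =>
    have := i.neZero
    rw [pow_succ', Perm.mul_apply, finRotate_apply, Fin.val_add, ZMod.natCast_mod, Nat.cast_add, ih,
      Fin.val_one', ZMod.natCast_mod]
    push_cast
    ring

theorem betaResidue_eq_mapDomain {k p : ℕ} {P : Partition} {τ : Perm (Fin k)}
    (hτ : ∀ i, (P.parts (τ i) - p - 1 - (τ i : ℕ) : ZMod k) = -1 - (i : ℕ)) :
    betaResidue k P = (beta k Partition.empty).mapDomain (τ * finRotate k ^ p) := by
  ext x
  obtain ⟨i, rfl⟩ := (τ * finRotate k ^ p).surjective x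
  rw [Finsupp.mapDomain_apply (Equiv.injective _), ← Nat.mod_eq_of_lt (beta_empty_lt i)]
  refine (ZMod.natCast_eq_natCast_iff' _ _ k).1 ?_
  rw [natCast_beta, natCast_beta, Perm.mul_apply]
  simp only [Partition.empty, Nat.cast_zero]
  linear_combination hτ ((finRotate k ^ p) i) - natCast_finRotate_pow k p i

/-- elementary form of the main theorem, computing Kostant's
coefficient for `SU(k)`: for `λ` with at most `k` parts and `|λ| = kp`, the
quantity `(−1)^{(k−1)p} Σ_{μ ⊢ p} (1/z_μ)·χ^λ_{kμ}` equals `0` if the numbers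
`λᵢ + k − i` (`1 ≤ i ≤ k`) do not have `k` distinct residues mod `k`, and
otherwise equals the sign of the (unique) `τ ∈ S_k` with
`λ_{τ(i)} − p + k − τ(i) ≡ k − i (mod k)` for all `i`; in particular it always
lies in `{0, 1, −1}`. (Parts are 0-indexed: `λᵢ = P.parts (i−1)`.) -/
theorem kostant_coefficient_for_SU_k (k p : ℕ) (hk : 2 ≤ k) (P : Partition)
    (hparts : ∀ i : ℕ, k ≤ i → P.parts i = 0) (hP : P.size = k * p) :
    ((¬ Function.Injective fun i : Fin k =>
        (((P.parts (i : ℕ) : ℤ) + (k : ℤ) - 1 - ((i : ℕ) : ℤ) : ℤ) : ZMod k)) →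
      (-1 : ℚ) ^ ((k - 1) * p) *
        ∑ μ : Nat.Partition p, (1 / (zpart μ.parts : ℚ)) *
          (chi P (μ.parts.map fun x => k * x) : ℚ) = 0) ∧
    (∀ τ : Equiv.Perm (Fin k),
      (∀ i : Fin k,
        (((P.parts ((τ i : ℕ)) : ℤ) - (p : ℤ) + (k : ℤ) - 1 - ((τ i : ℕ) : ℤ) : ℤ) :
            ZMod k) =
          (((k : ℤ) - 1 - ((i : ℕ) : ℤ) : ℤ) : ZMod k)) →
      (-1 : ℚ) ^ ((k - 1) * p) *
        ∑ μ : Nat.Partition p, (1 / (zpart μ.parts : ℚ)) *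
          (chi P (μ.parts.map fun x => k * x) : ℚ) =
        ((Equiv.Perm.sign τ : ℤ) : ℚ)) ∧
    ((-1 : ℚ) ^ ((k - 1) * p) *
        ∑ μ : Nat.Partition p, (1 / (zpart μ.parts : ℚ)) *
          (chi P (μ.parts.map fun x => k * x) : ℚ) = 0 ∨
      (-1 : ℚ) ^ ((k - 1) * p) *
        ∑ μ : Nat.Partition p, (1 / (zpart μ.parts : ℚ)) *
          (chi P (μ.parts.map fun x => k * x) : ℚ) = 1 ∨
      (-1 : ℚ) ^ ((k - 1) * p) *
        ∑ μ : Nat.Partition p, (1 / (zpart μ.parts : ℚ)) *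
          (chi P (μ.parts.map fun x => k * x) : ℚ) = -1) := by
  simp only [sum_chi_map_mul_eq_coeff_alternant (show k ≠ 0 by lia) hparts hP]
  push_cast
  simp only [ZMod.natCast_self, add_zero, zero_sub]
  have hδ := (beta_strictAnti k Partition.empty).injective
  refine ⟨fun hres ↦ ?_, fun τ hτ ↦ ?_, ?_⟩
  · rw [(isAlternating_alternant _).coeff_eq_zero (betaResidue_injective_iff.not.2 hres), mul_zero]
  · rw [betaResidue_eq_mapDomain hτ, coeff_alternant_mapDomain hδ, Perm.sign_mul, map_pow,
      sign_finRotate, ← pow_mul]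
    push_cast
    rw [mul_left_comm, ← mul_pow]
    simp
  · rcases neg_one_pow_eq_or ℚ ((k - 1) * p) with h | h <;>
      rcases coeff_alternant_eq_zero_or_eq_one_or_eq_neg_one (R := ℚ) hδ (betaResidue k P) with
        h' | h' | h' <;> simp [h, h']

end RimHookPaper
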